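/- Let f: A → B be a homomorphism of MV-algebras, let θ_f := ker(f) ∩ Rad(A), and let f̄: A/θ_f → B be the induced homomorphism [a] ↦ f(a) (well defined since θ_f ⊆ ker(f)). Then ker(f̄) ∩ Rad(A/θ_f) = {0}. -/

import Mathlib

namespace MVPaper

/-- An MV-algebra: a set with a binary `⊕`, a unary `¬`, and a constant `0`
satisfying the MV-algebra axioms. -/
class MV (α : Type*) where
  oplus : α → α → α
  neg : α → α
  zero : α
  oplus_assoc : ∀ x y z : α, oplus x (oplus y z) = oplus (oplus x y) z
  oplus_comm : ∀ x y : α, oplus x y = oplus y x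
  oplus_zero : ∀ x : α, oplus x zero = x
  neg_neg : ∀ x : α, neg (neg x) = x
  oplus_neg_zero : ∀ x : α, oplus x (neg zero) = neg zero
  lukasiewicz : ∀ x y : α,
    oplus (neg (oplus (neg x) y)) y = oplus (neg (oplus (neg y) x)) x

namespace MV

variable {α : Type*} [MV α]

/-- `1 := ¬0`. -/
def one : α := neg zero

/-- `x ⊙ y := ¬(¬x ⊕ ¬y)`. -/
def odot (x y : α) : α := neg (oplus (neg x) (neg y))

/-- `x ⊖ y := ¬(¬x ⊕ y)`. -/
def ominus (x y : α) : α := neg (oplus (neg x) y)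

/-- `d(x,y) := (x ⊖ y) ⊕ (y ⊖ x)`. -/
def dist (x y : α) : α := oplus (ominus x y) (ominus y x)

/-- The natural order: `x ≤ y` iff `¬x ⊕ y = 1`. -/
def le (x y : α) : Prop := oplus (neg x) y = one

/-- `x ∨ y := (x ⊖ y) ⊕ y`. -/
def sup (x y : α) : α := oplus (ominus x y) y

/-- `x ∧ y := x ⊙ (¬x ⊕ y)`. -/
def inf (x y : α) : α := odot x (oplus (neg x) y)

/-- `n · a`, the `n`-fold sum `a ⊕ ⋯ ⊕ a`. -/
def nsmul : ℕ → α → α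
  | 0, _ => zero
  | n + 1, a => oplus a (nsmul n a)

end MV

/-- Products of MV-algebras, with componentwise operations. -/
instance prodMV {α β : Type*} [MV α] [MV β] : MV (α × β) where
  oplus x y := (MV.oplus x.1 y.1, MV.oplus x.2 y.2)
  neg x := (MV.neg x.1, MV.neg x.2)
  zero := (MV.zero, MV.zero)
  oplus_assoc x y z :=
    congrArg₂ Prod.mk (MV.oplus_assoc _ _ _) (MV.oplus_assoc _ _ _)
  oplus_comm x y :=
    congrArg₂ Prod.mk (MV.oplus_comm _ _) (MV.oplus_comm _ _)
  oplus_zero x := by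
    obtain ⟨a, b⟩ := x
    exact congrArg₂ Prod.mk (MV.oplus_zero a) (MV.oplus_zero b)
  neg_neg x := by
    obtain ⟨a, b⟩ := x
    exact congrArg₂ Prod.mk (MV.neg_neg a) (MV.neg_neg b)
  oplus_neg_zero x :=
    congrArg₂ Prod.mk (MV.oplus_neg_zero _) (MV.oplus_neg_zero _)
  lukasiewicz x y :=
    congrArg₂ Prod.mk (MV.lukasiewicz _ _) (MV.lukasiewicz _ _)

/-- A homomorphism of MV-algebras: a map preserving `⊕`, `¬` and `0`. -/
structure IsHom {α β : Type*} [MV α] [MV β] (f : α → β) : Prop where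
  map_zero : f MV.zero = MV.zero
  map_oplus : ∀ x y : α, f (MV.oplus x y) = MV.oplus (f x) (f y)
  map_neg : ∀ x : α, f (MV.neg x) = MV.neg (f x)

/-- An ideal of an MV-algebra: contains `0`, closed under `⊕`, downward closed. -/
structure IsIdeal {α : Type*} [MV α] (I : Set α) : Prop where
  zero_mem : MV.zero ∈ I
  oplus_mem : ∀ ⦃x⦄, x ∈ I → ∀ ⦃y⦄, y ∈ I → MV.oplus x y ∈ I
  lower_mem : ∀ ⦃x⦄, x ∈ I → ∀ ⦃y⦄, MV.le y x → y ∈ I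

/-- The kernel of a homomorphism. -/
def ker {α β : Type*} [MV α] [MV β] (f : α → β) : Set α := {x | f x = MV.zero}

/-- The radical of an MV-algebra: `Rad(A) = {a | n·a ≤ ¬a for all n}`
(the intersection of all maximal proper ideals). -/
def Rad (α : Type*) [MV α] : Set α :=
  {a | ∀ n : ℕ, MV.le (MV.nsmul n a) (MV.neg a)}

/-- `P(A) := Rad(A) ∪ ¬Rad(A)`. -/
def PSet (α : Type*) [MV α] : Set α :=
  Rad α ∪ {x | MV.neg x ∈ Rad α}

/-- An MV-algebra is trivial if `0 = 1`. -/
def IsTrivial (α : Type*) [MV α] : Prop := (MV.zero : α) = MV.one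

/-- An MV-algebra is semisimple if its radical is trivial. -/
def Semisimple (α : Type*) [MV α] : Prop := Rad α = ({MV.zero} : Set α)

/-- An MV-algebra is perfect if `A = Rad(A) ∪ ¬Rad(A)`. -/
def Perfect (α : Type*) [MV α] : Prop := ∀ a : α, a ∈ PSet α

/-- `q : α → Q` realizes `Q` as the quotient of `α` by the ideal `I`,
i.e. by the congruence `x ∼ y ↔ d(x,y) ∈ I`. -/
structure IsQuotientBy {α Q : Type*} [MV α] [MV Q] (I : Set α) (q : α → Q) : Prop where
  hom : IsHom q
  surj : Function.Surjective q
  eq_iff : ∀ x y : α, q x = q y ↔ MV.dist x y ∈ I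

/-!
An MV-algebra is a canonically ordered commutative monoid under `⊕` whose truncated subtraction
is `⊖`.

The point is that the radical lifts along a quotient `q` by an ideal `I ⊆ Rad A`. If `q a` lies in
the radical, then `(n + 1) • a ≤ ¬a` holds modulo `I`, which means that the defect
`c = a ⊖ e`, with `e = ¬((n + 1) • a)`, lies in `I` and hence in `Rad A`. From `a ≤ c ⊕ e` and
`n • c ≤ ¬c = ¬a ⊕ e` we get `n • a ≤ ¬a ⊕ (n + 1) • e`. But `e = ¬(n • a) ⊙ ¬a` is absorbed by
`¬(n • a) ⊕ ¬a`, so already `n • a ≤ ¬a`.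
-/

namespace MV

variable {α : Type*} [MV α]

instance : AddCommMonoid α where
  add := oplus
  zero := zero
  add_assoc x y z := (oplus_assoc x y z).symm
  zero_add x := (oplus_comm zero x).trans (oplus_zero x)
  add_zero := oplus_zero
  add_comm := oplus_comm
  nsmul := nsmul
  nsmul_zero _ := rfl
  nsmul_succ n x := oplus_comm x (nsmul n x)

instance : Sub α := ⟨ominus⟩

theorem sub_add_self_comm (x y : α) : x - y + y = y - x + x := lukasiewicz x y

theorem neg_sub (x y : α) : neg (x - y) = neg x + y := neg_neg (neg x + y)

theorem neg_add (x y : α) : neg (x + y) = neg x - y :=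
  congrArg (fun z => neg (z + y)) (neg_neg x).symm

theorem add_one (x : α) : x + one = one := oplus_neg_zero x

theorem one_add (x : α) : one + x = one := by rw [add_comm, add_one]

theorem neg_one : neg (one : α) = 0 := neg_neg zero

theorem neg_add_self (x : α) : neg x + x = one := by
  have h : neg (neg one + x) + x = neg (neg x + one) + one := lukasiewicz one x
  rwa [neg_one, zero_add, add_one] at h

theorem sub_eq_zero_of_le {x y : α} (h : le x y) : x - y = 0 := (congrArg neg h).trans neg_one

theorem sub_add_cancel_of_le {x y : α} (h : le x y) : y - x + x = y := by
  rw [sub_add_self_comm, sub_eq_zero_of_le h, zero_add]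

theorem le_add_right_self (x y : α) : le x (x + y) := by
  change neg x + (x + y) = one
  rw [← add_assoc, neg_add_self, one_add]

instance : PartialOrder α where
  le := le
  le_refl := neg_add_self
  le_trans x y z hxy hyz := by
    rw [← sub_add_cancel_of_le hyz, ← sub_add_cancel_of_le hxy, add_comm, add_comm _ x, add_assoc]
    exact le_add_right_self x _
  le_antisymm x y hxy hyx := by
    rw [← sub_add_cancel_of_le hxy, sub_eq_zero_of_le hyx, zero_add]

instance : CanonicallyOrderedAdd α where
  exists_add_of_le {x y} h := ⟨y - x, by rw [add_comm, sub_add_cancel_of_le h]⟩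
  le_add_self x y := add_comm x y ▸ le_add_right_self x y
  le_self_add := le_add_right_self

instance : IsOrderedAddMonoid α := CanonicallyOrderedAdd.toIsOrderedAddMonoid

theorem le_iff_neg_add_eq_one {x y : α} : x ≤ y ↔ neg x + y = one := Iff.rfl

instance : OrderedSub α where
  tsub_le_iff_right x y z := by
    rw [le_iff_neg_add_eq_one, neg_sub, add_assoc, add_comm y, le_iff_neg_add_eq_one]

theorem le_neg_comm {x y : α} : x ≤ neg y ↔ y ≤ neg x := by
  rw [le_iff_neg_add_eq_one, add_comm, le_iff_neg_add_eq_one]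

theorem dist_zero (x : α) : dist x zero = x := by
  change x - 0 + (0 - x) = x
  rw [tsub_zero, zero_tsub, add_zero]

theorem add_neg_sub_self (x y : α) : x + neg y - x = neg y - (x - y) :=
  calc x + neg y - x = neg (neg (neg y + x) + x) := by rw [add_comm x]; rfl
    _ = neg (x - y + y) := congrArg neg (sub_add_self_comm y x)
    _ = neg y - (x - y) := by rw [add_comm, neg_add]

/- In MV notation `x - y` is `x ⊙ ¬y`: a sum absorbs the product of its two summands. -/
theorem add_neg_add_sub (x y : α) : x + neg y + (x - y) = x + neg y := by
  have hle : x - y ≤ neg y := by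
    rw [le_neg_comm, neg_sub]
    exact le_add_self
  have hsplit : x + neg y = neg y - (x - y) + x := by
    rw [← add_neg_sub_self, tsub_add_cancel_of_le le_self_add]
  calc x + neg y + (x - y) = neg y - (x - y) + (x - y) + x := by rw [hsplit, add_right_comm]
    _ = x + neg y := by rw [tsub_add_cancel_of_le hle, add_comm]

theorem add_nsmul_eq_self {x y : α} (h : x + y = x) (n : ℕ) : x + n • y = x := by
  induction n with
  | zero => rw [zero_nsmul, add_zero]
  | succ n ih => rw [succ_nsmul, ← add_assoc, ih, h]

theorem nsmul_le_neg_of_nsmul_sub_le {a : α} {n : ℕ}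
    (h : n • (a - neg ((n + 1) • a)) ≤ neg (a - neg ((n + 1) • a))) : n • a ≤ neg a := by
  set e := neg ((n + 1) • a) with he
  have habsorb : neg (n • a) + neg a + e = neg (n • a) + neg a := by
    rw [he, succ_nsmul, neg_add, add_neg_add_sub]
  have hle : n • a ≤ neg a + (n + 1) • e :=
    calc n • a ≤ n • (a - e + e) := nsmul_le_nsmul_right le_tsub_add n
      _ = n • (a - e) + n • e := nsmul_add _ _ n
      _ ≤ neg (a - e) + n • e := by gcongr
      _ = neg a + (n + 1) • e := by rw [neg_sub, succ_nsmul', add_assoc]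
  rw [le_iff_neg_add_eq_one] at hle ⊢
  rwa [← add_assoc, add_nsmul_eq_self habsorb] at hle

end MV

theorem mem_Rad_iff {α : Type*} [MV α] {a : α} : a ∈ Rad α ↔ ∀ n : ℕ, n • a ≤ MV.neg a := Iff.rfl

namespace IsHom

variable {α β : Type*} [MV α] [MV β] {f : α → β}

theorem map_sub (hf : IsHom f) (x y : α) : f (x - y) = f x - f y := by
  change f (MV.neg (MV.oplus (MV.neg x) y)) = MV.neg (MV.oplus (MV.neg (f x)) (f y))
  rw [hf.map_neg, hf.map_oplus, hf.map_neg]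

theorem map_nsmul (hf : IsHom f) (n : ℕ) (x : α) : f (n • x) = n • f x :=
  _root_.map_nsmul (⟨⟨f, hf.map_zero⟩, hf.map_oplus⟩ : α →+ β) n x

theorem monotone (hf : IsHom f) : Monotone f := fun x y hxy => by
  rw [← tsub_eq_zero_iff_le] at hxy ⊢
  rw [← hf.map_sub, hxy]
  exact hf.map_zero

theorem map_mem_Rad (hf : IsHom f) {a : α} (ha : a ∈ Rad α) : f a ∈ Rad β :=
  mem_Rad_iff.2 fun n => by
    rw [← hf.map_nsmul, ← hf.map_neg]
    exact hf.monotone (mem_Rad_iff.1 ha n)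

end IsHom

namespace IsQuotientBy

variable {α Q : Type*} [MV α] [MV Q] {I : Set α} {q : α → Q}

theorem map_eq_zero_iff (hq : IsQuotientBy I q) {x : α} : q x = MV.zero ↔ x ∈ I := by
  rw [← hq.hom.map_zero, hq.eq_iff, MV.dist_zero]

theorem map_le_map_iff (hq : IsQuotientBy I q) {x y : α} : q x ≤ q y ↔ x - y ∈ I := by
  rw [← tsub_eq_zero_iff_le, ← hq.hom.map_sub]
  exact hq.map_eq_zero_iff

theorem map_mem_Rad_iff (hq : IsQuotientBy I q) (hI : I ⊆ Rad α) {a : α} :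
    q a ∈ Rad Q ↔ a ∈ Rad α := by
  refine ⟨fun ha => mem_Rad_iff.2 fun n => ?_, hq.hom.map_mem_Rad⟩
  have hle : q a ≤ q (MV.neg ((n + 1) • a)) := by
    rw [hq.hom.map_neg, hq.hom.map_nsmul]
    exact MV.le_neg_comm.1 (mem_Rad_iff.1 ha (n + 1))
  have hdefect : a - MV.neg ((n + 1) • a) ∈ Rad α := hI (hq.map_le_map_iff.1 hle)
  exact MV.nsmul_le_neg_of_nsmul_sub_le (mem_Rad_iff.1 hdefect n)

end IsQuotientBy

theorem ker_inter_rad_of_quotient_general {α Q : Type*} [MV α] [MV Q] {π : α → Q} {K : Set Q}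
    (hπ : IsQuotientBy (π ⁻¹' K ∩ Rad α) π) : K ∩ Rad Q = ({MV.zero} : Set Q) := by
  ext y
  obtain ⟨a, rfl⟩ := hπ.surj y
  calc π a ∈ K ∩ Rad Q ↔ a ∈ π ⁻¹' K ∩ Rad α :=
        and_congr_right' (hπ.map_mem_Rad_iff Set.inter_subset_right)
    _ ↔ π a = MV.zero := hπ.map_eq_zero_iff.symm

/-- Let `f : A → B` be a homomorphism, `θ_f := ker f ∩ Rad A`, and let
`f̄ : A/θ_f → B` be the induced homomorphism (`f̄ ∘ π = f` where `π` is the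
quotient map). Then `ker f̄ ∩ Rad(A/θ_f) = {0}`. -/
theorem ker_inter_rad_of_quotient {α β Q : Type*} [MV α] [MV β] [MV Q]
    {f : α → β} (hf : IsHom f)
    {π : α → Q} (hπ : IsQuotientBy (ker f ∩ Rad α) π)
    {fb : Q → β} (hfb : IsHom fb) (hfac : fb ∘ π = f) :
    ker fb ∩ Rad Q = ({MV.zero} : Set Q) := by
  subst hfac
  exact ker_inter_rad_of_quotient_general hπ

end MVPaper
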